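/- arXiv:2402.16748 — 2 statements merged into one kernel-verified Lean document; each statement's English description precedes it below -/
import Mathlib

section
/- (Newton-like preconditioner is super-efficient.) With the Newton preconditioner P(x, y) := F_1(x, y), the preconditioned formula Ω^P(x, y) := Ω(x − F_1(x, y)^{−1}F(x, y), y) satisfies D_xΩ^P(x⋆(y), y) = 0 for every y ∈ ℝ^{d_y}; in particular ‖D_xΩ^P(x⋆(y), y)‖_op = 0. -/
noncomputable section

open ContinuousLinearMap RealInnerProductSpace

abbrev E (n : ℕ) : Type := EuclideanSpace ℝ (Fin n)

variable {dx dy : ℕ}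

/-- Partial Fréchet derivative in the first variable. -/
def pd1 {k : ℕ} (G : E dx × E dy → E k) (x : E dx) (y : E dy) : E dx →L[ℝ] E k :=
  fderiv ℝ (fun x' => G (x', y)) x

/-- Partial Fréchet derivative in the second variable. -/
def pd2 {k : ℕ} (G : E dx × E dy → E k) (x : E dx) (y : E dy) : E dy →L[ℝ] E k :=
  fderiv ℝ (fun y' => G (x, y')) y

/-- Partial gradient in the first variable. -/
def grad1 (g : E dx × E dy → ℝ) (x : E dx) (y : E dy) : E dx :=
  gradient (fun x' => g (x', y)) x

/-- Partial gradient in the second variable. -/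
def grad2 (g : E dx × E dy → ℝ) (x : E dx) (y : E dy) : E dy :=
  gradient (fun y' => g (x, y')) y

/-- Ψ(x, y) = −F₂(x,y)^⊤ ∘ (F₁(x,y)^⊤)⁻¹. -/
def Psi (F : E dx × E dy → E dx) (x : E dx) (y : E dy) : E dx →L[ℝ] E dy :=
  -((adjoint (pd2 F x y)).comp (Ring.inverse (adjoint (pd1 F x y))))

/-- The IFT formula Ω(x,y) = g₂(x,y) + Ψ(x,y) g₁(x,y). -/
def Omega (F : E dx × E dy → E dx) (g : E dx × E dy → ℝ) (x : E dx) (y : E dy) : E dy :=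
  grad2 g x y + Psi F x y (grad1 g x y)

/-- Newton-preconditioned formula Ωᴾ(x,y) = Ω(x − F₁(x,y)⁻¹ F(x,y), y). -/
def OmegaPNewton (F : E dx × E dy → E dx) (g : E dx × E dy → ℝ)
    (x : E dx) (y : E dy) : E dy :=
  Omega F g (x - Ring.inverse (pd1 F x y) (F (x, y))) y

/-- Over `ℝ` the adjoint is linear, hence differentiable. -/
theorem differentiable_adjoint (m n : ℕ) :
    Differentiable ℝ (fun A : E m →L[ℝ] E n => adjoint A) :=
  IsBoundedLinearMap.differentiable (𝕜 := ℝ)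
    { map_add := fun A B => map_add adjoint A B
      map_smul := fun c A => by simp
      bound := ⟨1, one_pos, fun A => by simp⟩ }

/-- Over `ℝ` the inverse Riesz map is linear, hence differentiable. -/
theorem differentiable_toDual_symm (n : ℕ) :
    Differentiable ℝ (fun l : StrongDual ℝ (E n) => (InnerProductSpace.toDual ℝ (E n)).symm l) :=
  IsBoundedLinearMap.differentiable (𝕜 := ℝ)
    { map_add := fun l l' => map_add (InnerProductSpace.toDual ℝ (E n)).symm l l'
      map_smul := fun c l => by simp
      bound := ⟨1, one_pos, fun l => by simp⟩ }

section PartialDerivatives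

variable {V : Type*} [NormedAddCommGroup V] [NormedSpace ℝ V] {G : E dx × E dy → V}

theorem differentiable_fderiv_fst (hG : ContDiff ℝ (⊤ : ℕ∞) G) (y : E dy) :
    Differentiable ℝ (fun x => fderiv ℝ (fun x' => G (x', y)) x) := by
  have h : ContDiff ℝ (⊤ : ℕ∞) (fun x' => G (x', y)) := by fun_prop
  exact (h.fderiv_right (m := 1) (by norm_cast)).differentiable one_ne_zero

theorem differentiable_fderiv_snd (hG : ContDiff ℝ (⊤ : ℕ∞) G) (y : E dy) :
    Differentiable ℝ (fun x => fderiv ℝ (fun y' => G (x, y')) y) := by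
  have h : ContDiff ℝ 1 (fun x => fderiv ℝ (fun y' => G (x, y')) y) :=
    ContDiff.fderiv (m := (⊤ : ℕ∞)) (n := 1) (f := fun x y' => G (x, y')) hG contDiff_const
      (by norm_cast)
  exact h.differentiable one_ne_zero

end PartialDerivatives

theorem isUnit_adjoint {n : ℕ} {A : E n →L[ℝ] E n} (hA : IsUnit A) : IsUnit (adjoint A) :=
  hA.star

theorem differentiable_ringInverse_comp {m n : ℕ} {A : E m → E n →L[ℝ] E n}
    (hA : Differentiable ℝ A) (hu : ∀ x, IsUnit (A x)) :
    Differentiable ℝ (fun x => Ring.inverse (A x)) := fun x =>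
  (differentiableAt_inverse (hu x)).comp x (hA x)

theorem differentiable_Omega {F : E dx × E dy → E dx} {g : E dx × E dy → ℝ}
    (hF : ContDiff ℝ (⊤ : ℕ∞) F) (hg : ContDiff ℝ (⊤ : ℕ∞) g)
    (hinv : ∀ (x : E dx) (y : E dy), IsUnit (pd1 F x y)) (y : E dy) :
    Differentiable ℝ (fun x => Omega F g x y) := by
  have hgrad1 : Differentiable ℝ (fun x => grad1 g x y) :=
    (differentiable_toDual_symm dx).comp (differentiable_fderiv_fst hg y)
  have hgrad2 : Differentiable ℝ (fun x => grad2 g x y) :=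
    (differentiable_toDual_symm dy).comp (differentiable_fderiv_snd hg y)
  have hadj1 : Differentiable ℝ (fun x => adjoint (pd1 F x y)) :=
    (differentiable_adjoint dx dx).comp (differentiable_fderiv_fst hF y)
  have hadj2 : Differentiable ℝ (fun x => adjoint (pd2 F x y)) :=
    (differentiable_adjoint dy dx).comp (differentiable_fderiv_snd hF y)
  have hPsi : Differentiable ℝ (fun x => Psi F x y) :=
    (hadj2.clm_comp
      (differentiable_ringInverse_comp hadj1 fun x => isUnit_adjoint (hinv x y))).neg
  exact hgrad2.add (hPsi.clm_apply hgrad1)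

/-- The derivative of the Newton map vanishes at a root. -/
theorem hasFDerivAt_newton_of_root {F : E dx × E dy → E dx}
    (hF : ContDiff ℝ (⊤ : ℕ∞) F) {y : E dy}
    (hinv : ∀ x : E dx, IsUnit (pd1 F x y)) {x₀ : E dx} (hroot : F (x₀, y) = 0) :
    HasFDerivAt (fun x => x - Ring.inverse (pd1 F x y) (F (x, y)))
      (0 : E dx →L[ℝ] E dx) x₀ := by
  have hslice : ContDiff ℝ (⊤ : ℕ∞) (fun x => F (x, y)) := by fun_prop
  have hF₀ : HasFDerivAt (fun x => F (x, y)) (pd1 F x₀ y) x₀ :=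
    (hslice.differentiable (by simp) x₀).hasFDerivAt
  have hI : HasFDerivAt (fun x => Ring.inverse (pd1 F x y)) _ x₀ :=
    (differentiable_ringInverse_comp (differentiable_fderiv_fst hF y) hinv x₀).hasFDerivAt
  refine ((hasFDerivAt_id x₀).sub (hI.clm_apply hF₀)).congr_fderiv ?_
  have hcancel : (Ring.inverse (pd1 F x₀ y)).comp (pd1 F x₀ y) = .id ℝ (E dx) :=
    Ring.inverse_mul_cancel _ (hinv x₀)
  ext1 v
  have hv := congrArg (fun A : E dx →L[ℝ] E dx => A v) hcancel
  simp only [coe_comp, Function.comp_apply, coe_id', id_eq] at hv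
  simpa [hroot, sub_eq_zero] using hv.symm

/-- the Newton-like preconditioner is super-efficient. -/
theorem stmt7 (dx dy : ℕ) (hdx : 0 < dx) (hdy : 0 < dy)
    (F : E dx × E dy → E dx) (g : E dx × E dy → ℝ)
    (hF : ContDiff ℝ (⊤ : ℕ∞) F) (hg : ContDiff ℝ (⊤ : ℕ∞) g)
    (hinv : ∀ (x : E dx) (y : E dy), IsUnit (pd1 F x y))
    (xs : E dy → E dx) (hxs : Differentiable ℝ xs)
    (hroot : ∀ y : E dy, F (xs y, y) = 0) :
    ∀ y : E dy,
      fderiv ℝ (fun x => OmegaPNewton F g x y) (xs y) = 0 ∧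
      ‖fderiv ℝ (fun x => OmegaPNewton F g x y) (xs y)‖ = 0 := by
  intro y
  have hN := hasFDerivAt_newton_of_root hF (fun x => hinv x y) (hroot y)
  have hΩ := (differentiable_Omega hF hg hinv y
    (xs y - Ring.inverse (pd1 F (xs y) y) (F (xs y, y)))).hasFDerivAt
  have hcomp := (hΩ.comp (xs y) hN).congr_fderiv (comp_zero _)
  have h : fderiv ℝ (fun x => OmegaPNewton F g x y) (xs y) = 0 := hcomp.fderiv
  exact ⟨h, by rw [h, norm_zero]⟩
end
end

section
/- (Consistency of the reparameterized estimator.) For every y ∈ ℝ^{d_y}, writing x⋆ := x⋆(y) and z⋆ := φ(·, y)^{−1}(x⋆): V^φ(x⋆, y) = F_1(x⋆, y) (hence invertible), U^φ(x⋆, y) = F_2(x⋆, y) + F_1(x⋆, y) φ_2(z⋆, y), Ψ^φ(x⋆, y) = Ψ(x⋆, y), and therefore Ω^φ(x⋆, y) = Ω(x⋆, y) = ∇h(y). -/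
noncomputable section

open ContinuousLinearMap RealInnerProductSpace

variable {dx dy : ℕ}

/-- φ₁₁(z,y)[w]: Hessian in z of z ↦ ⟪w, φ(z,y)⟫. -/
def phi11 (φ : E dx × E dy → E dx) (z : E dx) (y : E dy) (w : E dx) : E dx →L[ℝ] E dx :=
  fderiv ℝ (fun z' => gradient (fun z'' => ⟪w, φ (z'', y)⟫) z') z

/-- φ₂₁(z,y)[w]: mixed second derivative of (z,y) ↦ ⟪w, φ(z,y)⟫, an element of ℝ^{dx×dy}. -/
def phi21 (φ : E dx × E dy → E dx) (z : E dx) (y : E dy) (w : E dx) : E dy →L[ℝ] E dx :=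
  fderiv ℝ (fun y' => gradient (fun z' => ⟪w, φ (z', y')⟫) z) y

/-- Uᶠ(x,y) = F₂ + F₁ φ₂(z,y) + φ₁(z,y)⁻¹ (φ₂₁(z,y)[F(x,y)]), with z = φ(·,y)⁻¹(x). -/
def Uphi (F : E dx × E dy → E dx) (φ : E dx × E dy → E dx) (φinv : E dx × E dy → E dx)
    (x : E dx) (y : E dy) : E dy →L[ℝ] E dx :=
  pd2 F x y + (pd1 F x y).comp (pd2 φ (φinv (x, y)) y) +
    (Ring.inverse (pd1 φ (φinv (x, y)) y)).comp (phi21 φ (φinv (x, y)) y (F (x, y)))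

/-- Vᶠ(x,y) = (φ₁^⊤)⁻¹ (φ₁₁(z,y)[F(x,y)]) φ₁⁻¹ + F₁(x,y), with z = φ(·,y)⁻¹(x). -/
def Vphi (F : E dx × E dy → E dx) (φ : E dx × E dy → E dx) (φinv : E dx × E dy → E dx)
    (x : E dx) (y : E dy) : E dx →L[ℝ] E dx :=
  (Ring.inverse (adjoint (pd1 φ (φinv (x, y)) y))).comp
      ((phi11 φ (φinv (x, y)) y (F (x, y))).comp (Ring.inverse (pd1 φ (φinv (x, y)) y))) +
    pd1 F x y

/-- Ψᶠ(x,y) = φ₂(z,y)^⊤ − Uᶠ(x,y)^⊤ (Vᶠ(x,y)^⊤)⁻¹. -/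
def Psiphi (F : E dx × E dy → E dx) (φ : E dx × E dy → E dx) (φinv : E dx × E dy → E dx)
    (x : E dx) (y : E dy) : E dx →L[ℝ] E dy :=
  adjoint (pd2 φ (φinv (x, y)) y) -
    (adjoint (Uphi F φ φinv x y)).comp (Ring.inverse (adjoint (Vphi F φ φinv x y)))

/-- The reparameterized formula Ωᶠ(x,y) = g₂(x,y) + Ψᶠ(x,y) g₁(x,y). -/
def Omegaphi (F : E dx × E dy → E dx) (g : E dx × E dy → ℝ)
    (φ : E dx × E dy → E dx) (φinv : E dx × E dy → E dx) (x : E dx) (y : E dy) : E dy :=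
  grad2 g x y + Psiphi F φ φinv x y (grad1 g x y)

/-- Total derivative of `G` along the graph of `u`, in terms of its partial derivatives. -/
theorem hasFDerivAt_along_graph {A B N : Type*} [NormedAddCommGroup A] [NormedSpace ℝ A]
    [NormedAddCommGroup B] [NormedSpace ℝ B] [NormedAddCommGroup N] [NormedSpace ℝ N]
    {G : A × B → N} {u : B → A} {y : B}
    (hG : DifferentiableAt ℝ G (u y, y)) (hu : DifferentiableAt ℝ u y) :
    HasFDerivAt (fun y' => G (u y', y'))
      ((fderiv ℝ (fun x' => G (x', y)) (u y)).comp (fderiv ℝ u y) +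
        fderiv ℝ (fun y' => G (u y, y')) y) y := by
  have h₁ : HasFDerivAt (fun x' => G (x', y)) _ (u y) :=
    hG.hasFDerivAt.comp (u y) (hasFDerivAt_prodMk_left (u y) y)
  have h₂ : HasFDerivAt (fun y' => G (u y, y')) _ y :=
    hG.hasFDerivAt.comp y (hasFDerivAt_prodMk_right (u y) y)
  have h₃ : HasFDerivAt (fun y' => G (u y', y')) _ y :=
    HasFDerivAt.comp (f := fun y' => (u y', y')) y hG.hasFDerivAt
      (hu.hasFDerivAt.prodMk (hasFDerivAt_id y))
  rw [h₁.fderiv, h₂.fderiv]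
  convert h₃ using 1
  ext v
  simp [← map_add]

theorem isUnit_adjoint_s8 {H : Type*} [NormedAddCommGroup H] [InnerProductSpace ℝ H]
    [CompleteSpace H] {A : H →L[ℝ] H} (hA : IsUnit A) : IsUnit (adjoint A) := by
  rw [← star_eq_adjoint]
  exact hA.star

theorem phi11_zero (φ : E dx × E dy → E dx) (z : E dx) (y : E dy) : phi11 φ z y 0 = 0 := by
  simp [phi11]

theorem phi21_zero (φ : E dx × E dy → E dx) (z : E dx) (y : E dy) : phi21 φ z y 0 = 0 := by
  simp [phi21]

theorem Vphi_eq_of_root {F φ φinv : E dx × E dy → E dx} {x : E dx} {y : E dy}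
    (hx : F (x, y) = 0) : Vphi F φ φinv x y = pd1 F x y := by
  simp [Vphi, hx, phi11_zero]

theorem Uphi_eq_of_root {F φ φinv : E dx × E dy → E dx} {x : E dx} {y : E dy}
    (hx : F (x, y) = 0) :
    Uphi F φ φinv x y = pd2 F x y + (pd1 F x y).comp (pd2 φ (φinv (x, y)) y) := by
  simp [Uphi, hx, phi21_zero]

theorem Psiphi_eq_of_root {F φ φinv : E dx × E dy → E dx} {x : E dx} {y : E dy}
    (hx : F (x, y) = 0) (hF₁ : IsUnit (pd1 F x y)) :
    Psiphi F φ φinv x y = Psi F x y := by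
  have hcancel := Ring.mul_inverse_cancel _ (isUnit_adjoint_s8 hF₁)
  rw [mul_def, one_def] at hcancel
  rw [Psiphi, Psi, Vphi_eq_of_root hx, Uphi_eq_of_root hx, map_add, adjoint_comp, add_comp,
    comp_assoc, hcancel, ContinuousLinearMap.comp_id]
  abel

/-- The implicit function formula computes the gradient of `y ↦ g (u y, y)` along a
differentiable branch `u` of roots of `F`. -/
theorem Omega_eq_gradient {F : E dx × E dy → E dx} {g : E dx × E dy → ℝ} {u : E dy → E dx}
    {y : E dy} (hF : DifferentiableAt ℝ F (u y, y)) (hg : DifferentiableAt ℝ g (u y, y))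
    (hu : DifferentiableAt ℝ u y) (hroot : ∀ y', F (u y', y') = 0)
    (hF₁ : IsUnit (pd1 F (u y) y)) :
    Omega F g (u y) y = gradient (fun y' => g (u y', y')) y := by
  refine ext_inner_right ℝ fun v => ?_
  have hF₂ : pd2 F (u y) y v = -pd1 F (u y) y (fderiv ℝ u y v) := by
    have h₁ := (hasFDerivAt_along_graph hF hu).fderiv
    simp only [hroot, fderiv_fun_const] at h₁
    have h₂ := congrArg (fun L => L v) h₁
    exact eq_neg_of_add_eq_zero_right h₂.symm
  have hcancel := congrArg (fun L => L (grad1 g (u y) y))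
    (Ring.mul_inverse_cancel _ (isUnit_adjoint_s8 hF₁))
  rw [mul_def, one_def, comp_apply, id_apply] at hcancel
  rw [inner_gradient_left, (hasFDerivAt_along_graph hg hu).fderiv, Omega, inner_add_left, Psi,
    neg_apply, inner_neg_left, comp_apply, adjoint_inner_left, hF₂, inner_neg_right, neg_neg,
    ← adjoint_inner_left, hcancel, grad1, grad2, inner_gradient_left, inner_gradient_left,
    add_apply, comp_apply, add_comm]

/-- consistency of the reparameterized estimator. -/
theorem stmt8 (dx dy : ℕ) (hdx : 0 < dx) (hdy : 0 < dy)
    (F : E dx × E dy → E dx) (g : E dx × E dy → ℝ)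
    (hF : ContDiff ℝ (⊤ : ℕ∞) F) (hg : ContDiff ℝ (⊤ : ℕ∞) g)
    (hinv : ∀ (x : E dx) (y : E dy), IsUnit (pd1 F x y))
    (xs : E dy → E dx) (hxs : Differentiable ℝ xs)
    (hroot : ∀ y : E dy, F (xs y, y) = 0)
    (h : E dy → ℝ) (hh : ∀ y : E dy, h y = g (xs y, y))
    (φ : E dx × E dy → E dx) (hφ : ContDiff ℝ (⊤ : ℕ∞) φ)
    (φinv : E dx × E dy → E dx) (hφinv : ContDiff ℝ (⊤ : ℕ∞) φinv)
    (hleft : ∀ (z : E dx) (y : E dy), φinv (φ (z, y), y) = z)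
    (hright : ∀ (x : E dx) (y : E dy), φ (φinv (x, y), y) = x)
    (hphi1 : ∀ (z : E dx) (y : E dy), IsUnit (pd1 φ z y)) :
    ∀ y : E dy,
      Vphi F φ φinv (xs y) y = pd1 F (xs y) y ∧
      Uphi F φ φinv (xs y) y =
        pd2 F (xs y) y + (pd1 F (xs y) y).comp (pd2 φ (φinv (xs y, y)) y) ∧
      Psiphi F φ φinv (xs y) y = Psi F (xs y) y ∧
      Omegaphi F g φ φinv (xs y) y = Omega F g (xs y) y ∧
      Omega F g (xs y) y = gradient h y := by
  intro y
  have hΨ : Psiphi F φ φinv (xs y) y = Psi F (xs y) y :=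
    Psiphi_eq_of_root (hroot y) (hinv (xs y) y)
  refine ⟨Vphi_eq_of_root (hroot y), Uphi_eq_of_root (hroot y), hΨ, ?_, ?_⟩
  · rw [Omegaphi, Omega, hΨ]
  · rw [funext hh]
    exact Omega_eq_gradient (hF.differentiable (by simp) _) (hg.differentiable (by simp) _)
      (hxs y) hroot (hinv (xs y) y)
end
end
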